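/- For every λ-term M, L_r(T_r(M)) = T_r(L(M)), where L_r(T_r(M)) = { L_r(a) | a ∈ T_r(M) and L_r(a) ≠ 0 }; that is, the left-parallel reduction commutes with rigid expansion. -/

import Mathlib

/-! Ordinary λ-terms, in de Bruijn notation. -/
inductive Lam : Type
  | var : ℕ → Lam
  | lam : Lam → Lam
  | app : Lam → Lam → Lam
  deriving DecidableEq

namespace Lam

/-- Shift the free indices `≥ d` up by one. -/
def lift (d : ℕ) : Lam → Lam
  | var n => if n < d then var n else var (n + 1)
  | lam M => lam (lift (d + 1) M)
  | app P Q => app (lift d P) (lift d Q)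

/-- Capture-avoiding substitution of `N` for the free variable `k`. -/
def subst : Lam → ℕ → Lam → Lam
  | var n, k, N => if n = k then N else if k < n then var (n - 1) else var n
  | lam M, k, N => lam (subst M (k + 1) (lift 0 N))
  | app P Q, k, N => app (subst P k N) (subst Q k N)

/-- Number of free occurrences of the variable `k`. -/
def count (k : ℕ) : Lam → ℕ
  | var n => if n = k then 1 else 0
  | lam M => count (k + 1) M
  | app P Q => count k P + count k Q

/-- One-step β-reduction. -/
inductive Beta : Lam → Lam → Prop
  | beta (M N : Lam) : Beta (app (lam M) N) (subst M 0 N)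
  | lam {M M'} : Beta M M' → Beta (lam M) (lam M')
  | appL {P P' Q} : Beta P P' → Beta (app P Q) (app P' Q)
  | appR {P Q Q'} : Beta Q Q' → Beta (app P Q) (app P Q')

/-- The head of the application spine is a variable, with no λ on the spine. -/
def neutral : Lam → Bool
  | var _ => true
  | lam _ => false
  | app P _ => neutral P

/-- Head-normal forms: `λx₁…λxₘ. x N₁ … Nₙ`. -/
def isHNF : Lam → Prop
  | var _ => True
  | lam M => isHNF M
  | app P _ => neutral P = true

/-- The head-reduction function `H`: contracts the head redex, identity on head-normal
forms. -/
def H : Lam → Lam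
  | var n => var n
  | lam M => lam (H M)
  | app (lam P) Q => subst P 0 Q
  | app (var n) Q => app (var n) Q
  | app (app P₁ P₂) Q => app (H (app P₁ P₂)) Q

/-- The left-parallel reduction function `L`: identity on β-normal forms, propagated to
the arguments on head-normal forms, contraction of the head redex otherwise. -/
def L : Lam → Lam
  | var n => var n
  | lam M => lam (L M)
  | app (lam P) Q => subst P 0 Q
  | app (var n) Q => app (var n) (L Q)
  | app (app P₁ P₂) Q =>
      if neutral (app P₁ P₂) then app (L (app P₁ P₂)) (L Q)
      else app (L (app P₁ P₂)) Q

/-- Iterated application `M N₁ … Nₙ`. -/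
def mkApps (M : Lam) (Ns : List Lam) : Lam := Ns.foldl app M

/-- All free variables are `< d`. -/
def ClosedAt (d : ℕ) : Lam → Prop
  | var n => n < d
  | lam M => ClosedAt (d + 1) M
  | app P Q => ClosedAt d P ∧ ClosedAt d Q

/-- `M` is head-normalizable: it β-reduces in finitely many steps to a head-normal form. -/
def HeadNormalizable (M : Lam) : Prop :=
  ∃ N, Relation.ReflTransGen Beta M N ∧ isHNF N

/-- `M` is a β-normal form: it contains no β-redex, i.e. admits no β-step. -/
def BetaNF (M : Lam) : Prop := ¬∃ N, Beta M N

/-- `M` is β-normalizable: it β-reduces in finitely many steps to a β-normal form. -/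
def BetaNormalizable (M : Lam) : Prop :=
  ∃ N, Relation.ReflTransGen Beta M N ∧ BetaNF N

/-- `M` is strongly β-normalizable: no infinite β-reduction sequence starts from `M`. -/
def StronglyNormalizable (M : Lam) : Prop := Acc (fun N M' => Beta M' N) M

end Lam

/-! Rigid resource terms (the nonzero ones), in de Bruijn notation:
`a ::= x | λx.a | ⟨c⟩d⃗` with `d⃗` a list of rigid terms.
The term `0` is represented by `none : Option Rig`. -/
inductive Rig : Type
  | var : ℕ → Rig
  | lam : Rig → Rig
  | app : Rig → List Rig → Rig

namespace Rig

mutual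
/-- Number of free occurrences of the variable `k` in a rigid term. -/
def countR (k : ℕ) : Rig → ℕ
  | var n => if n = k then 1 else 0
  | lam a => countR (k + 1) a
  | app c ds => countR k c + countRList k ds
termination_by a => sizeOf a

def countRList (k : ℕ) : List Rig → ℕ
  | [] => 0
  | d :: ds => countR k d + countRList k ds
termination_by ds => sizeOf ds
end

mutual
/-- Shift the free indices `≥ d` up by one. -/
def liftR (d : ℕ) : Rig → Rig
  | var n => if n < d then var n else var (n + 1)
  | lam a => lam (liftR (d + 1) a)
  | app c ds => app (liftR d c) (liftRList d ds)
termination_by a => sizeOf a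

def liftRList (d : ℕ) : List Rig → List Rig
  | [] => []
  | a :: as => liftR d a :: liftRList d as
termination_by as => sizeOf as
end

mutual
/-- Rigid substitution `a[b⃗/k]`: the list `b⃗` is distributed, in order, over the
free occurrences of the variable `k`; the result is `none` (i.e. `0`) when
`|b⃗| ≠ n_k(a)`. -/
def rsubst (k : ℕ) : Rig → List Rig → Option Rig
  | var n, bs =>
      if n = k then (match bs with | [b] => some b | _ => none)
      else (match bs with
            | [] => some (if k < n then var (n - 1) else var n)
            | _ => none)
  | lam a, bs => (rsubst (k + 1) a (liftRList 0 bs)).map lam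
  | app c ds, bs =>
      match rsubst k c (bs.take (countR k c)), rsubstList k ds (bs.drop (countR k c)) with
      | some c', some ds' => some (app c' ds')
      | _, _ => none
termination_by a _ => sizeOf a

def rsubstList (k : ℕ) : List Rig → List Rig → Option (List Rig)
  | [], bs => if bs.isEmpty then some [] else none
  | d :: ds, bs =>
      match rsubst k d (bs.take (countR k d)), rsubstList k ds (bs.drop (countR k d)) with
      | some d', some ds' => some (d' :: ds')
      | _, _ => none
termination_by ds _ => sizeOf ds
end

/-- One-step rigid resource reduction `→_r` (contextual closure of
`⟨λx.a⟩b⃗ →_r a[b⃗/x]`); the result may be `0` (i.e. `none`), which annihilates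
the surrounding context. -/
inductive RStep : Rig → Option Rig → Prop
  | beta (a : Rig) (bs : List Rig) : RStep (app (lam a) bs) (rsubst 0 a bs)
  | lam {a r} : RStep a r → RStep (lam a) (r.map lam)
  | head {c r} (ds : List Rig) : RStep c r → RStep (app c ds) (r.map (fun c' => app c' ds))
  | arg {d r} (c : Rig) (ds₁ ds₂ : List Rig) :
      RStep d r → RStep (app c (ds₁ ++ d :: ds₂)) (r.map (fun d' => app c (ds₁ ++ d' :: ds₂)))

/-- `→_r` on rigid terms extended with `0`; `0` is inert. -/
inductive RStepO : Option Rig → Option Rig → Prop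
  | mk {a r} : RStep a r → RStepO (some a) r

/-- `r` is a `→_r`-normal form (`0` is one). -/
def RNormal (r : Option Rig) : Prop := ¬∃ r', RStepO r r'

/-- The head of the application spine is a variable, with no λ on the spine. -/
def rNeutral : Rig → Bool
  | var _ => true
  | lam _ => false
  | app c _ => rNeutral c

/-- Rigid head-normal forms among nonzero terms: `λx₁…λxₘ.⟨…⟨x⟩d⃗₁…⟩d⃗ₙ`
(the term `0` is a head-normal form, but it is treated separately). -/
def rIsHNF : Rig → Prop
  | var _ => True
  | lam a => rIsHNF a
  | app c _ => rNeutral c = true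

/-- The rigid head-reduction function `H_r`: contracts the head redex, identity on
head-normal forms; the result may be `0` (i.e. `none`). -/
def Hr : Rig → Option Rig
  | var n => some (var n)
  | lam a => (Hr a).map lam
  | app (lam a) bs => rsubst 0 a bs
  | app (var n) ds => some (app (var n) ds)
  | app (app c₁ c₂) ds => (Hr (app c₁ c₂)).map (fun c' => app c' ds)

/-- `H_r` extended to terms-or-`0`. -/
def HrO : Option Rig → Option Rig := fun r => r.bind Hr

mutual
/-- The rigid left-parallel reduction function `L_r`: identity on `→_r`-normal forms,
applied componentwise to the argument lists on head-normal forms, contraction of the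
head redex otherwise; the result may be `0` (i.e. `none`). -/
def Lr : Rig → Option Rig
  | var n => some (var n)
  | lam a => (Lr a).map lam
  | app (lam a) bs => rsubst 0 a bs
  | app (var n) ds => (LrList ds).map (fun ds' => app (var n) ds')
  | app (app c₁ c₂) ds =>
      if rNeutral (app c₁ c₂) then
        match Lr (app c₁ c₂), LrList ds with
        | some c', some ds' => some (app c' ds')
        | _, _ => none
      else (Lr (app c₁ c₂)).map (fun c' => app c' ds)
termination_by a => sizeOf a

def LrList : List Rig → Option (List Rig)
  | [] => some []
  | d :: ds =>
      match Lr d, LrList ds with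
      | some d', some ds' => some (d' :: ds')
      | _, _ => none
termination_by ds => sizeOf ds
end

/-- `L_r` extended to terms-or-`0`. -/
def LrO : Option Rig → Option Rig := fun r => r.bind Lr

/-- Positive resource terms: no empty list/multiset occurs as the argument of an
application. -/
inductive rPositive : Rig → Prop
  | var (n : ℕ) : rPositive (var n)
  | lam {a} : rPositive a → rPositive (lam a)
  | app {c : Rig} {ds : List Rig} :
      rPositive c → ds ≠ [] → (∀ d ∈ ds, rPositive d) → rPositive (app c ds)

end Rig

/-- The rigid expansion `T_r(M)` of a λ-term (equivalently, the support of its Taylor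
expansion, with multisets presented by lists: `Texp M` is closed under permutation of
argument lists). -/
def Texp : Lam → Set Rig
  | Lam.var n => {Rig.var n}
  | Lam.lam M => {a | ∃ b ∈ Texp M, a = Rig.lam b}
  | Lam.app P Q => {a | ∃ c ∈ Texp P, ∃ ds : List Rig, (∀ d ∈ ds, d ∈ Texp Q) ∧ a = Rig.app c ds}

namespace Rig

/-- The support of the `n`-linear substitution `∂_k a · b̄`, where the multiset `b̄` is
presented by the list `bs`: the finite formal sum (multiset) of all nonzero results of
rigid substitutions along bijective assignments, i.e. permutations of `bs`. -/
def permSubst (k : ℕ) (a : Rig) (bs : List Rig) : Multiset Rig :=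
  ↑(bs.permutations.filterMap (fun bs' => rsubst k a bs'))

/-- One step of non-erasing ε-resource reduction `→^{¬e}_{∂ε}` out of a single resource
term, producing a finite formal sum (a multiset) of resource terms: non-erasing resource
β-steps `⟨λx.a⟩b̄ → ∂_x a · b̄` (with `x ∈ FV(a)`) and resource σ₁-steps, under any
context. -/
inductive NEStep : Rig → Multiset Rig → Prop
  | beta {a : Rig} (bs : List Rig) :
      0 < countR 0 a → NEStep (app (lam a) bs) (permSubst 0 a bs)
  | sigma (a : Rig) (ts qs : List Rig) :
      NEStep (app (app (lam a) ts) qs) {app (lam (app a (liftRList 0 qs))) ts}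
  | lam {a σ} : NEStep a σ → NEStep (lam a) (σ.map lam)
  | head {c σ} (ds : List Rig) : NEStep c σ → NEStep (app c ds) (σ.map (fun c' => app c' ds))
  | arg {d σ} (c : Rig) (ds₁ ds₂ : List Rig) :
      NEStep d σ → NEStep (app c (ds₁ ++ d :: ds₂)) (σ.map (fun d' => app c (ds₁ ++ d' :: ds₂)))

/-- Non-erasing ε-resource reduction on finite formal sums, extended by linearity. -/
def NEStepSum (σ τ : Multiset Rig) : Prop :=
  ∃ (a : Rig) (ρ υ : Multiset Rig), σ = a ::ₘ ρ ∧ NEStep a υ ∧ τ = υ + ρ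

/-- `σ` is a `→^{¬e}_{∂ε}`-normal form. -/
def NENormal (σ : Multiset Rig) : Prop := ¬∃ τ, NEStepSum σ τ

end Rig

/-- One step of non-erasing ε-reduction on λ-terms: non-erasing β-steps
`(λx.M)N → M[N/x]` (with `x ∈ FV(M)`) together with σ₁-steps
`((λx.M)N)P → (λx.MP)N` (`x ∉ FV(P)`), under any context. -/
inductive NEeps : Lam → Lam → Prop
  | beta {M : Lam} (N : Lam) :
      0 < Lam.count 0 M → NEeps (Lam.app (Lam.lam M) N) (Lam.subst M 0 N)
  | sigma (M N P : Lam) :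
      NEeps (Lam.app (Lam.app (Lam.lam M) N) P)
        (Lam.app (Lam.lam (Lam.app M (Lam.lift 0 P))) N)
  | lam {M M'} : NEeps M M' → NEeps (Lam.lam M) (Lam.lam M')
  | appL {P P' Q} : NEeps P P' → NEeps (Lam.app P Q) (Lam.app P' Q)
  | appR {P Q Q'} : NEeps Q Q' → NEeps (Lam.app P Q) (Lam.app P Q')

/-- The set `S` of λ-terms. -/
inductive SLam : Lam → Prop
  | varApp (n : ℕ) (Ms : List Lam) :
      (∀ M ∈ Ms, SLam M) → SLam (Lam.mkApps (Lam.var n) Ms)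
  | lam {M} : SLam M → SLam (Lam.lam M)
  | redex (M₀ M₁ : Lam) (Ms : List Lam) :
      SLam M₁ → SLam (Lam.mkApps (Lam.subst M₀ 0 M₁) Ms) →
      SLam (Lam.mkApps (Lam.app (Lam.lam M₀) M₁) Ms)

/-- λI-terms: every abstraction binds a variable occurring free in its body. -/
def LamI : Lam → Prop
  | Lam.var _ => True
  | Lam.lam M => LamI M ∧ 0 < Lam.count 0 M
  | Lam.app P Q => LamI P ∧ LamI Q

/-!
Extend the syntax of rigid terms, rigid substitution and `L_r` to sets of rigid terms, application
ranging over all finite lists of arguments. Then `T_r` becomes the canonical homomorphism from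
λ-terms to sets of rigid terms, and the theorem follows by induction on `M` once the set extensions
satisfy the equations that define substitution and `L` on λ-terms. For substitution in an
application, this works because the list `b⃗` in `(⟨c⟩d⃗)[b⃗/x]` is cut into a part for `c` and a
part for `d⃗`, and conversely two lists giving nonzero results for `c` and `d⃗` have the right
lengths to be cut again after concatenation. For `L_r`, all elements of `T_r(M)` have the head shape
of `M`, hence select the same clause of the reduction.
-/

section ListLifting

theorem exists_forall_mem_and_forall₂_iff {α β : Type*} {R : α → β → Prop} {S : Set α}
    {bs : List β} :
    (∃ as : List α, (∀ a ∈ as, a ∈ S) ∧ List.Forall₂ R as bs) ↔ ∀ b ∈ bs, ∃ a ∈ S, R a b := by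
  induction bs with
  | nil => simp
  | cons b bs ih =>
    simp only [List.forall₂_cons_right_iff, List.forall_mem_cons, ← ih]
    constructor
    · rintro ⟨_, hS, a, as, hab, has, rfl⟩
      obtain ⟨ha, has'⟩ := List.forall_mem_cons.1 hS
      exact ⟨⟨a, ha, hab⟩, as, has', has⟩
    · rintro ⟨⟨a, ha, hab⟩, as, has', has⟩
      exact ⟨a :: as, List.forall_mem_cons.2 ⟨ha, has'⟩, a, as, hab, has, rfl⟩

theorem forall_mem_image_iff_exists_map {α β : Type*} {f : α → β} {S : Set α} {bs : List β} :
    (∀ b ∈ bs, b ∈ f '' S) ↔ ∃ as : List α, (∀ a ∈ as, a ∈ S) ∧ as.map f = bs := by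
  have forall₂_iff (as : List α) : List.Forall₂ (fun a b => f a = b) as bs ↔ as.map f = bs := by
    rw [← List.forall₂_map_left_iff (R := (· = ·)), List.forall₂_eq_eq_eq]
  simp only [Set.mem_image, ← exists_forall_mem_and_forall₂_iff, forall₂_iff]

end ListLifting

namespace Lam

theorem L_app_of_neutral {P : Lam} (hP : P.neutral = true) (Q : Lam) :
    L (app P Q) = app (L P) (L Q) := by
  cases P with
  | var n => rfl
  | lam P => exact absurd hP Bool.false_ne_true
  | app P₁ P₂ => simp only [L, if_pos hP]

theorem L_app_app_of_not_neutral {P₁ P₂ : Lam} (h : ¬(app P₁ P₂).neutral = true) (Q : Lam) :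
    L (app (app P₁ P₂) Q) = app (L (app P₁ P₂)) Q := by
  simp only [L, if_neg h]

end Lam

namespace Rig

section Substitution

variable {k n : ℕ} {a c r : Rig} {bs ds rs : List Rig}

theorem liftRList_eq_map (d : ℕ) (as : List Rig) : liftRList d as = as.map (liftR d) := by
  induction as with
  | nil => simp only [liftRList, List.map_nil]
  | cons a as ih => simp only [liftRList, ih, List.map_cons]

theorem rsubst_var_self_eq_some_iff : rsubst k (var k) bs = some r ↔ bs = [r] := by
  rcases bs with _ | ⟨b, _ | ⟨b', bs⟩⟩ <;> simp [rsubst]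

theorem rsubst_var_eq_some_iff_of_ne (h : n ≠ k) :
    rsubst k (var n) bs = some r ↔ bs = [] ∧ r = if k < n then var (n - 1) else var n := by
  rw [rsubst.eq_def]
  cases bs <;> simp [h, eq_comm]

mutual

theorem length_eq_countR_of_rsubst_eq_some :
    ∀ {k : ℕ} {a : Rig} {bs : List Rig} {r : Rig},
      rsubst k a bs = some r → bs.length = countR k a
  | k, var n, bs, r, h => by
    rcases eq_or_ne n k with rfl | hn
    · simp [rsubst_var_self_eq_some_iff.1 h, countR]
    · simp [((rsubst_var_eq_some_iff_of_ne hn).1 h).1, countR, hn]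
  | k, lam a, bs, r, h => by
    simp only [rsubst, Option.map_eq_some_iff] at h
    obtain ⟨a', ha', -⟩ := h
    simpa only [liftRList_eq_map, List.length_map, countR] using
      length_eq_countR_of_rsubst_eq_some ha'
  | k, app c ds, bs, r, h => by
    simp only [rsubst] at h
    split at h
    case h_1 hc hds =>
      rw [countR, ← length_eq_countR_of_rsubst_eq_some hc,
        ← length_eq_countRList_of_rsubstList_eq_some hds, ← List.length_append,
        List.take_append_drop]
    case h_2 => cases h

theorem length_eq_countRList_of_rsubstList_eq_some :
    ∀ {k : ℕ} {ds bs rs : List Rig},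
      rsubstList k ds bs = some rs → bs.length = countRList k ds
  | k, [], bs, rs, h => by
    cases bs <;> simp_all [rsubstList, countRList]
  | k, d :: ds, bs, rs, h => by
    simp only [rsubstList] at h
    split at h
    case h_1 hd hds =>
      rw [countRList, ← length_eq_countR_of_rsubst_eq_some hd,
        ← length_eq_countRList_of_rsubstList_eq_some hds, ← List.length_append,
        List.take_append_drop]
    case h_2 => cases h

end

theorem rsubst_app_eq_some_iff :
    rsubst k (app c ds) bs = some r ↔
      ∃ bs₁ bs₂, bs₁ ++ bs₂ = bs ∧ ∃ c', rsubst k c bs₁ = some c' ∧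
        ∃ ds', rsubstList k ds bs₂ = some ds' ∧ r = app c' ds' := by
  constructor
  · intro h
    simp only [rsubst] at h
    split at h
    case h_1 c' ds' hc hds =>
      exact ⟨_, _, List.take_append_drop _ _, c', hc, ds', hds, (Option.some.inj h).symm⟩
    case h_2 => cases h
  · rintro ⟨bs₁, bs₂, rfl, c', hc, ds', hds, rfl⟩
    simp only [rsubst, ← length_eq_countR_of_rsubst_eq_some hc, List.take_left, List.drop_left,
      hc, hds]

theorem rsubstList_cons_eq_some_iff :
    rsubstList k (a :: ds) bs = some rs ↔
      ∃ bs₁ bs₂, bs₁ ++ bs₂ = bs ∧ ∃ a', rsubst k a bs₁ = some a' ∧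
        ∃ ds', rsubstList k ds bs₂ = some ds' ∧ rs = a' :: ds' := by
  constructor
  · intro h
    simp only [rsubstList] at h
    split at h
    case h_1 a' ds' ha hds =>
      exact ⟨_, _, List.take_append_drop _ _, a', ha, ds', hds, (Option.some.inj h).symm⟩
    case h_2 => cases h
  · rintro ⟨bs₁, bs₂, rfl, a', ha, ds', hds, rfl⟩
    simp only [rsubstList, ← length_eq_countR_of_rsubst_eq_some ha, List.take_left,
      List.drop_left, ha, hds]

theorem exists_rsubstList_eq_some_iff_forall₂ {B : Set Rig} :
    (∃ bs : List Rig, (∀ b ∈ bs, b ∈ B) ∧ rsubstList k ds bs = some rs) ↔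
      List.Forall₂ (fun d r => ∃ bs : List Rig, (∀ b ∈ bs, b ∈ B) ∧ rsubst k d bs = some r)
        ds rs := by
  induction ds generalizing rs with
  | nil =>
    have h_nil (bs : List Rig) : rsubstList k [] bs = some rs ↔ bs = [] ∧ rs = [] := by
      cases bs <;> simp [rsubstList, eq_comm]
    simp [h_nil]
  | cons d ds ih =>
    simp only [List.forall₂_cons_left_iff, rsubstList_cons_eq_some_iff, ← ih]
    constructor
    · rintro ⟨_, hB, bs₁, bs₂, rfl, d', hd, ds', hds, rfl⟩
      obtain ⟨hB₁, hB₂⟩ := List.forall_mem_append.1 hB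
      exact ⟨d', ds', ⟨bs₁, hB₁, hd⟩, ⟨bs₂, hB₂, hds⟩, rfl⟩
    · rintro ⟨d', ds', ⟨bs₁, hB₁, hd⟩, ⟨bs₂, hB₂, hds⟩, rfl⟩
      exact ⟨bs₁ ++ bs₂, List.forall_mem_append.2 ⟨hB₁, hB₂⟩, bs₁, bs₂, rfl, d', hd, ds', hds, rfl⟩

end Substitution

section LeftParallel

variable {c : Rig}

theorem LrList_eq_some_iff_forall₂ {ds rs : List Rig} :
    LrList ds = some rs ↔ List.Forall₂ (fun d r => Lr d = some r) ds rs := by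
  induction ds generalizing rs with
  | nil => simp [LrList, eq_comm]
  | cons d ds ih =>
    simp only [List.forall₂_cons_left_iff, ← ih, LrList]
    cases Lr d <;> cases LrList ds <;> simp [eq_comm]

theorem Lr_app_eq_some_iff_of_rNeutral (hc : c.rNeutral = true) {ds : List Rig} {r : Rig} :
    Lr (app c ds) = some r ↔
      ∃ c', Lr c = some c' ∧ ∃ ds', LrList ds = some ds' ∧ r = app c' ds' := by
  cases c with
  | var n => simp [Lr, eq_comm]
  | lam a => exact absurd hc Bool.false_ne_true
  | app c₁ c₂ =>
    rw [Lr, if_pos hc]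
    cases Lr (app c₁ c₂) <;> cases LrList ds <;> simp [eq_comm]

theorem Lr_app_app_of_not_rNeutral {es : List Rig} (h : ¬(app c es).rNeutral = true)
    (ds : List Rig) : Lr (app (app c es) ds) = (Lr (app c es)).map (app · ds) := by
  rw [Lr, if_neg h]

end LeftParallel

section SetOperations

variable {A B C : Set Rig}

/-- The set `⟨A⟩B⃗` of rigid applications with head in `A` and all arguments in `B`; it is the
clause of `Texp` for applications, on arbitrary sets of rigid terms. -/
def appSet (A B : Set Rig) : Set Rig :=
  {r | ∃ c ∈ A, ∃ ds : List Rig, (∀ d ∈ ds, d ∈ B) ∧ r = app c ds}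

/-- The set `A[B⃗/k]` of all nonzero rigid substitutions of lists over `B` for the variable `k` in
elements of `A`. -/
def rsubstSet (k : ℕ) (A B : Set Rig) : Set Rig :=
  {r | ∃ a ∈ A, ∃ bs : List Rig, (∀ b ∈ bs, b ∈ B) ∧ rsubst k a bs = some r}

/-- The set `L_r(A)` of the nonzero left-parallel reducts of elements of `A`. -/
def LrSet (A : Set Rig) : Set Rig := {r | ∃ a ∈ A, Lr a = some r}

theorem liftR_image_lam (d : ℕ) (A : Set Rig) :
    liftR d '' (lam '' A) = lam '' (liftR (d + 1) '' A) := by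
  simp only [Set.image_image, liftR]

theorem liftR_image_appSet (d : ℕ) (A B : Set Rig) :
    liftR d '' appSet A B = appSet (liftR d '' A) (liftR d '' B) := by
  ext r
  simp only [appSet, forall_mem_image_iff_exists_map]
  constructor
  · rintro ⟨_, ⟨c, hc, ds, hds, rfl⟩, rfl⟩
    exact ⟨_, ⟨c, hc, rfl⟩, _, ⟨ds, hds, rfl⟩, by rw [liftR, liftRList_eq_map]⟩
  · rintro ⟨_, ⟨c, hc, rfl⟩, _, ⟨ds, hds, rfl⟩, rfl⟩
    exact ⟨_, ⟨c, hc, ds, hds, rfl⟩, by rw [liftR, liftRList_eq_map]⟩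

theorem rsubstSet_var_self (k : ℕ) (B : Set Rig) : rsubstSet k {var k} B = B := by
  ext r
  simp [rsubstSet, rsubst_var_self_eq_some_iff]

theorem rsubstSet_var_of_ne {k n : ℕ} (h : n ≠ k) (B : Set Rig) :
    rsubstSet k {var n} B = {if k < n then var (n - 1) else var n} := by
  ext r
  simp [rsubstSet, rsubst_var_eq_some_iff_of_ne h]

theorem rsubstSet_lam (k : ℕ) (A B : Set Rig) :
    rsubstSet k (lam '' A) B = lam '' rsubstSet (k + 1) A (liftR 0 '' B) := by
  ext r
  simp only [rsubstSet, forall_mem_image_iff_exists_map]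
  constructor
  · rintro ⟨_, ⟨a, ha, rfl⟩, bs, hbs, h⟩
    rw [rsubst, liftRList_eq_map, Option.map_eq_some_iff] at h
    obtain ⟨a', ha', rfl⟩ := h
    exact ⟨a', ⟨a, ha, _, ⟨bs, hbs, rfl⟩, ha'⟩, rfl⟩
  · rintro ⟨a', ⟨a, ha, _, ⟨bs, hbs, rfl⟩, ha'⟩, rfl⟩
    exact ⟨_, ⟨a, ha, rfl⟩, bs, hbs, by rw [rsubst, liftRList_eq_map, ha', Option.map_some]⟩

theorem forall_mem_rsubstSet_iff {k : ℕ} {rs : List Rig} :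
    (∀ r ∈ rs, r ∈ rsubstSet k A B) ↔
      ∃ ds : List Rig, (∀ d ∈ ds, d ∈ A) ∧
        ∃ bs : List Rig, (∀ b ∈ bs, b ∈ B) ∧ rsubstList k ds bs = some rs := by
  simp only [exists_rsubstList_eq_some_iff_forall₂]
  exact exists_forall_mem_and_forall₂_iff.symm

theorem rsubstSet_appSet (k : ℕ) (A B C : Set Rig) :
    rsubstSet k (appSet A B) C = appSet (rsubstSet k A C) (rsubstSet k B C) := by
  ext r
  simp only [appSet, forall_mem_rsubstSet_iff]
  constructor
  · rintro ⟨_, ⟨c, hc, ds, hds, rfl⟩, _, hbs, h⟩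
    obtain ⟨bs₁, bs₂, rfl, c', hc', ds', hds', rfl⟩ := rsubst_app_eq_some_iff.1 h
    obtain ⟨hbs₁, hbs₂⟩ := List.forall_mem_append.1 hbs
    exact ⟨c', ⟨c, hc, bs₁, hbs₁, hc'⟩, ds', ⟨ds, hds, bs₂, hbs₂, hds'⟩, rfl⟩
  · rintro ⟨c', ⟨c, hc, bs₁, hbs₁, hc'⟩, ds', ⟨ds, hds, bs₂, hbs₂, hds'⟩, rfl⟩
    exact ⟨_, ⟨c, hc, ds, hds, rfl⟩, bs₁ ++ bs₂, List.forall_mem_append.2 ⟨hbs₁, hbs₂⟩,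
      rsubst_app_eq_some_iff.2 ⟨bs₁, bs₂, rfl, c', hc', ds', hds', rfl⟩⟩

theorem LrSet_var (n : ℕ) : LrSet {var n} = {var n} := by
  ext r
  simp [LrSet, Lr, eq_comm]

theorem LrSet_lam (A : Set Rig) : LrSet (lam '' A) = lam '' LrSet A := by
  ext r
  constructor
  · rintro ⟨_, ⟨a, ha, rfl⟩, h⟩
    rw [Lr, Option.map_eq_some_iff] at h
    obtain ⟨a', ha', rfl⟩ := h
    exact ⟨a', ⟨a, ha, ha'⟩, rfl⟩
  · rintro ⟨a', ⟨a, ha, ha'⟩, rfl⟩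
    exact ⟨_, ⟨a, ha, rfl⟩, by rw [Lr, ha', Option.map_some]⟩

theorem LrSet_appSet_lam (A B : Set Rig) : LrSet (appSet (lam '' A) B) = rsubstSet 0 A B := by
  ext r
  constructor
  · rintro ⟨_, ⟨_, ⟨a, ha, rfl⟩, bs, hbs, rfl⟩, h⟩
    exact ⟨a, ha, bs, hbs, by rwa [Lr] at h⟩
  · rintro ⟨a, ha, bs, hbs, h⟩
    exact ⟨_, ⟨_, ⟨a, ha, rfl⟩, bs, hbs, rfl⟩, by rwa [Lr]⟩

theorem forall_mem_LrSet_iff {rs : List Rig} :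
    (∀ r ∈ rs, r ∈ LrSet A) ↔ ∃ ds : List Rig, (∀ d ∈ ds, d ∈ A) ∧ LrList ds = some rs := by
  simp only [LrList_eq_some_iff_forall₂]
  exact exists_forall_mem_and_forall₂_iff.symm

theorem LrSet_appSet_of_rNeutral (hA : ∀ c ∈ A, c.rNeutral = true) (B : Set Rig) :
    LrSet (appSet A B) = appSet (LrSet A) (LrSet B) := by
  ext r
  simp only [appSet, forall_mem_LrSet_iff]
  constructor
  · rintro ⟨_, ⟨c, hc, ds, hds, rfl⟩, h⟩
    obtain ⟨c', hc', ds', hds', rfl⟩ := (Lr_app_eq_some_iff_of_rNeutral (hA c hc)).1 h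
    exact ⟨c', ⟨c, hc, hc'⟩, ds', ⟨ds, hds, hds'⟩, rfl⟩
  · rintro ⟨c', ⟨c, hc, hc'⟩, ds', ⟨ds, hds, hds'⟩, rfl⟩
    exact ⟨_, ⟨c, hc, ds, hds, rfl⟩,
      (Lr_app_eq_some_iff_of_rNeutral (hA c hc)).2 ⟨c', hc', ds', hds', rfl⟩⟩

theorem LrSet_appSet_appSet_of_not_rNeutral (hAB : ∀ c ∈ appSet A B, ¬c.rNeutral = true)
    (C : Set Rig) : LrSet (appSet (appSet A B) C) = appSet (LrSet (appSet A B)) C := by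
  have Lr_app_eq_some_iff {c : Rig} (hc : c ∈ appSet A B) (ds : List Rig) (r : Rig) :
      Lr (app c ds) = some r ↔ ∃ c', Lr c = some c' ∧ r = app c' ds := by
    have hc_rNeutral := hAB c hc
    obtain ⟨c, -, es, -, rfl⟩ := hc
    simp only [Lr_app_app_of_not_rNeutral hc_rNeutral, Option.map_eq_some_iff, eq_comm (a := r)]
  ext r
  constructor
  · rintro ⟨_, ⟨c, hc, ds, hds, rfl⟩, h⟩
    obtain ⟨c', hc', rfl⟩ := (Lr_app_eq_some_iff hc ds r).1 h
    exact ⟨c', ⟨c, hc, hc'⟩, ds, hds, rfl⟩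
  · rintro ⟨c', ⟨c, hc, hc'⟩, ds, hds, rfl⟩
    exact ⟨_, ⟨c, hc, ds, hds, rfl⟩, (Lr_app_eq_some_iff hc ds _).2 ⟨c', hc', rfl⟩⟩

end SetOperations

end Rig

section RigidExpansion

open Rig

theorem Texp_var (n : ℕ) : Texp (Lam.var n) = {Rig.var n} := rfl

theorem Texp_lam (M : Lam) : Texp (Lam.lam M) = Rig.lam '' Texp M := by
  ext a
  simp only [Texp, Set.mem_image, eq_comm]
  rfl

theorem Texp_app (P Q : Lam) : Texp (Lam.app P Q) = appSet (Texp P) (Texp Q) := rfl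

theorem rNeutral_eq_neutral_of_mem_Texp {M : Lam} {a : Rig} (ha : a ∈ Texp M) :
    a.rNeutral = M.neutral := by
  induction M generalizing a with
  | var n => obtain rfl := ha; rfl
  | lam M => obtain ⟨b, -, rfl⟩ := ha; rfl
  | app P Q ihP => obtain ⟨c, hc, ds, -, rfl⟩ := ha; simpa only [rNeutral, Lam.neutral] using ihP hc

theorem Texp_lift (N : Lam) (d : ℕ) : Texp (N.lift d) = liftR d '' Texp N := by
  induction N generalizing d with
  | var n =>
    rw [Lam.lift, Texp_var, Set.image_singleton, liftR]
    split <;> rfl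
  | lam M ih => rw [Lam.lift, Texp_lam, Texp_lam, ih, liftR_image_lam]
  | app P Q ihP ihQ => rw [Lam.lift, Texp_app, Texp_app, ihP, ihQ, liftR_image_appSet]

theorem Texp_subst (M : Lam) (k : ℕ) (N : Lam) :
    Texp (M.subst k N) = rsubstSet k (Texp M) (Texp N) := by
  induction M generalizing k N with
  | var n =>
    rw [Lam.subst, Texp_var]
    rcases eq_or_ne n k with rfl | hn
    · rw [if_pos rfl, rsubstSet_var_self]
    · rw [if_neg hn, rsubstSet_var_of_ne hn]
      split <;> rfl
  | lam M ih => rw [Lam.subst, Texp_lam, Texp_lam, ih, Texp_lift, rsubstSet_lam]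
  | app P Q ihP ihQ => rw [Lam.subst, Texp_app, Texp_app, ihP, ihQ, rsubstSet_appSet]

end RigidExpansion

/-- `L_r(T_r(M)) = T_r(L(M))`, where
`L_r(T_r(M)) = { L_r(a) | a ∈ T_r(M), L_r(a) ≠ 0 }`: the left-parallel reduction
commutes with rigid expansion. -/
theorem left_parallel_commutes_with_Texp (M : Lam) :
    {b : Rig | ∃ a ∈ Texp M, Rig.Lr a = some b} = Texp (Lam.L M) := by
  change Rig.LrSet (Texp M) = Texp (Lam.L M)
  induction M with
  | var n => exact Rig.LrSet_var n
  | lam M ih => rw [Lam.L, Texp_lam, Texp_lam, Rig.LrSet_lam, ih]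
  | app P Q ihP ihQ =>
    by_cases hP : P.neutral = true
    · have hTexp : ∀ c ∈ Texp P, c.rNeutral = true := fun c hc =>
        (rNeutral_eq_neutral_of_mem_Texp hc).trans hP
      rw [Lam.L_app_of_neutral hP, Texp_app, Texp_app, Rig.LrSet_appSet_of_rNeutral hTexp, ihP, ihQ]
    · cases P with
      | var n => exact absurd rfl hP
      | lam P => rw [Lam.L, Texp_app, Texp_lam, Rig.LrSet_appSet_lam, Texp_subst]
      | app P₁ P₂ =>
        have hTexp : ∀ c ∈ Texp (P₁.app P₂), ¬c.rNeutral = true := fun c hc =>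
          (rNeutral_eq_neutral_of_mem_Texp hc).symm ▸ hP
        rw [Lam.L_app_app_of_not_neutral hP, Texp_app, Texp_app (Lam.L _), ← ihP]
        exact Rig.LrSet_appSet_appSet_of_not_rNeutral hTexp (Texp Q)
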